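/- arXiv:math/0608395 — 2 statements merged into one kernel-verified Lean document; each statement's English description precedes it below -/
import Mathlib

section
/- Let V be a vector space. The map Θ : V ⊗ T(V) → DR¹(V) given by Θ(x⊗y) := dx·y, where DR¹(V) is the degree-one part of the quotient of the noncommutative forms Ω•(V) by (graded) commutators, is an isomorphism of vector spaces. -/
/- STATEMENT 2.  Θ : V ⊗ T(V) → DR¹(V), Θ(x⊗y) = dx·y, is an isomorphism of
vector spaces.  Here Ω¹(V) = T(V) ⊗ T⁺(V) is modelled as T(V) ⊗ (V ⊗ T(V))
(the multiplication map μ : V ⊗ T(V) → T(V), v⊗w ↦ v·w, identifies V ⊗ T(V)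
with the augmentation ideal T⁺(V)), and DR¹(V) is the quotient of Ω¹(V) by the
span of the commutators a·ω − ω·a, a ∈ T(V), ω ∈ Ω¹(V).  The element a is
decomposed as a scalar c plus a positive part μ(α); the right action is the
standard one (x⊗y)·a = x⊗ya − xy⊗a.  In DR¹ one has dx·y = y·dx, and Θ is
realised by x⊗y ↦ [y·dx] = [y ⊗ (x ⊗ 1)]. -/

open TensorProduct

noncomputable section

variable (V : Type) [AddCommGroup V] [Module ℂ V]

abbrev TA := TensorAlgebra ℂ V

/-- Ω¹(V) = T(V) ⊗ T⁺(V), with T⁺(V) modelled as V ⊗ T(V). -/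
abbrev Om := TA V ⊗[ℂ] (V ⊗[ℂ] TA V)

/-- μ : V ⊗ T(V) → T(V), the multiplication (identifying V⊗T(V) with T⁺(V)). -/
def mu : V ⊗[ℂ] TA V →ₗ[ℂ] TA V :=
  TensorProduct.lift ((LinearMap.mul ℂ (TA V)).comp (TensorAlgebra.ι ℂ))

/-- Left action of a ∈ T(V) on Ω¹(V). -/
def lAct2 (a : TA V) : Om V →ₗ[ℂ] Om V :=
  TensorProduct.map (LinearMap.mulLeft ℂ a) LinearMap.id

/-- Right action of a = c·1 + μ(α) ∈ T(V) on Ω¹(V):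
    (x ⊗ y)·a = c·(x⊗y) + x ⊗ (y·μ(α)) − (x·μ(y)) ⊗ α. -/
def rAct2 (c : ℂ) (α : V ⊗[ℂ] TA V) : Om V →ₗ[ℂ] Om V :=
  c • LinearMap.id
  + TensorProduct.map LinearMap.id
      (TensorProduct.map LinearMap.id (LinearMap.mulRight ℂ (mu V α)))
  - ((TensorProduct.mk ℂ (TA V) (V ⊗[ℂ] TA V)).flip α).comp
      ((LinearMap.mul' ℂ (TA V)).comp (TensorProduct.map LinearMap.id (mu V)))

/-- The span of commutators [T(V), Ω¹(V)]. -/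
def commSub : Submodule ℂ (Om V) :=
  Submodule.span ℂ
    {u | ∃ (c : ℂ) (α : V ⊗[ℂ] TA V) (ω : Om V),
      u = lAct2 V (algebraMap ℂ (TA V) c + mu V α) ω - rAct2 V c α ω}

/-- DR¹(V) = Ω¹(V)/[Ω,Ω]. -/
abbrev DR1 := Om V ⧸ commSub V

/-- Θ : V ⊗ T(V) → DR¹(V), Θ(x ⊗ y) = dx·y  ( = class of y·dx = y ⊗ (x⊗1) ). -/
def Theta : V ⊗[ℂ] TA V →ₗ[ℂ] DR1 V :=
  (commSub V).mkQ.comp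
    ((TensorProduct.comm ℂ (V ⊗[ℂ] TA V) (TA V)).toLinearMap.comp
      (TensorProduct.map ((TensorProduct.mk ℂ V (TA V)).flip (1 : TA V)) LinearMap.id))

/-!
The inverse of `Θ` is `x · da ↦ D a x`, where the cyclic derivative `D` is determined by
`D v x = v ⊗ x` for `v ∈ V` and the cyclic Leibniz rule `D (a b) x = D a (b x) + D b (x a)`.
This rule says that `D` is a derivation into the `T(V)`-bimodule of linear maps
`T(V) → V ⊗ T(V)`, that is, an algebra map from `T(V)` to a square-zero extension; since `T(V)`
is free, prescribing it on `V` suffices. The Leibniz rule also makes `x · da ↦ D a x` vanish on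
commutators. Conversely, modulo commutators `x · d(b u) = u x · db + x b · du` for `u ∈ V`, which
is the same recursion, so induction on words gives `x · da = Θ (D a x)` in `DR¹(V)`.
-/

section HomBimodule

variable (R A N : Type*) [CommSemiring R] [Semiring A] [Algebra R A] [AddCommMonoid N] [Module R N]

/-- The `R`-linear maps `A → N`, as an `A`-bimodule under `(a • f) x = f (x * a)` and
`(f • a) x = f (a * x)`; a type synonym, so that these actions cannot clash with those coming
from an `A`-module structure on `N`. -/
def HomBimodule := A →ₗ[R] N

namespace HomBimodule

instance : AddCommMonoid (HomBimodule R A N) := inferInstanceAs (AddCommMonoid (A →ₗ[R] N))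

instance : Module R (HomBimodule R A N) := inferInstanceAs (Module R (A →ₗ[R] N))

instance : Module A (HomBimodule R A N) where
  smul a f := LinearMap.comp f (LinearMap.mulRight R a)
  one_smul (f : A →ₗ[R] N) := LinearMap.ext fun x => congrArg f (mul_one x)
  mul_smul a b (f : A →ₗ[R] N) := LinearMap.ext fun x => congrArg f (mul_assoc x a b).symm
  smul_zero _ := rfl
  smul_add _ _ _ := rfl
  add_smul a b (f : A →ₗ[R] N) := LinearMap.ext fun x =>
    (congrArg f (mul_add x a b)).trans (map_add f _ _)
  zero_smul (f : A →ₗ[R] N) := LinearMap.ext fun x => (congrArg f (mul_zero x)).trans (map_zero f)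

instance : Module Aᵐᵒᵖ (HomBimodule R A N) where
  smul a f := LinearMap.comp f (LinearMap.mulLeft R a.unop)
  one_smul (f : A →ₗ[R] N) := LinearMap.ext fun x => congrArg f (one_mul x)
  mul_smul a b (f : A →ₗ[R] N) := LinearMap.ext fun x =>
    congrArg f (mul_assoc b.unop a.unop x)
  smul_zero _ := rfl
  smul_add _ _ _ := rfl
  add_smul a b (f : A →ₗ[R] N) := LinearMap.ext fun x =>
    (congrArg f (add_mul a.unop b.unop x)).trans (map_add f _ _)
  zero_smul (f : A →ₗ[R] N) := LinearMap.ext fun x => (congrArg f (zero_mul x)).trans (map_zero f)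

instance : SMulCommClass A Aᵐᵒᵖ (HomBimodule R A N) where
  smul_comm a b (f : A →ₗ[R] N) := LinearMap.ext fun x => congrArg f (mul_assoc b.unop x a).symm

instance : IsScalarTower R A (HomBimodule R A N) where
  smul_assoc r a (f : A →ₗ[R] N) := LinearMap.ext fun x =>
    (congrArg f (mul_smul_comm r x a)).trans (map_smul f r _)

instance : IsScalarTower R Aᵐᵒᵖ (HomBimodule R A N) where
  smul_assoc r a (f : A →ₗ[R] N) := LinearMap.ext fun x =>
    (congrArg f (smul_mul_assoc r a.unop x)).trans (map_smul f r _)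

/-- A linear map `A → N`, seen as an element of the bimodule of such maps. -/
def ofLinearMap : (A →ₗ[R] N) ≃ₗ[R] HomBimodule R A N := LinearEquiv.refl R _

end HomBimodule

end HomBimodule

section CyclicDerivative

variable {R M : Type*} [CommSemiring R] [AddCommMonoid M] [Module R M]

theorem tensorAlgebra_right_induction {P : TensorAlgebra R M → Prop} (one : P 1)
    (smul : ∀ (r : R) a, P a → P (r • a)) (add : ∀ a b, P a → P b → P (a + b))
    (mul_ι : ∀ a v, P a → P (a * TensorAlgebra.ι R v)) (a : TensorAlgebra R M) : P a := by
  suffices h : ∀ b, P b → P (b * a) by simpa only [one_mul] using h 1 one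
  induction a using TensorAlgebra.induction with
  | algebraMap r =>
    intro b hb
    rw [← Algebra.commutes, ← Algebra.smul_def]
    exact smul r b hb
  | ι v => exact fun b hb => mul_ι b v hb
  | mul a a' ha ha' =>
    intro b hb
    rw [← mul_assoc]
    exact ha' _ (ha b hb)
  | add a a' ha ha' =>
    intro b hb
    rw [mul_add]
    exact add _ _ (ha b hb) (ha' b hb)

variable (R M)

/-- The algebra map `a ↦ (a, D a)` into the square-zero extension of `T(M)` by the bimodule of
linear maps `T(M) → M ⊗ T(M)`, where `D` is the cyclic derivative. -/
def cyclicDerivHom : TensorAlgebra R M →ₐ[R] TrivSqZeroExt (TensorAlgebra R M)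
    (HomBimodule R (TensorAlgebra R M) (M ⊗[R] TensorAlgebra R M)) :=
  TensorAlgebra.lift R <|
    (TrivSqZeroExt.inlAlgHom R _ _).toLinearMap ∘ₗ TensorAlgebra.ι R +
      (TrivSqZeroExt.inrHom (TensorAlgebra R M) _).restrictScalars R ∘ₗ
        (HomBimodule.ofLinearMap R _ _).toLinearMap ∘ₗ TensorProduct.mk R M (TensorAlgebra R M)

/-- The cyclic derivative `D a x = ∑ᵢ vᵢ ⊗ (vᵢ₊₁ ⋯ vₙ x v₁ ⋯ vᵢ₋₁)` for `a = v₁ ⋯ vₙ`; this is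
the class of `x · da` once `dv · y` is identified with `v ⊗ y`. -/
def cyclicDeriv : TensorAlgebra R M →ₗ[R] TensorAlgebra R M →ₗ[R] M ⊗[R] TensorAlgebra R M :=
  (HomBimodule.ofLinearMap R _ _).symm.toLinearMap ∘ₗ
    (TrivSqZeroExt.sndHom (TensorAlgebra R M) _).restrictScalars R ∘ₗ
      (cyclicDerivHom R M).toLinearMap

variable {R M}

theorem fst_cyclicDerivHom (a : TensorAlgebra R M) : (cyclicDerivHom R M a).fst = a := by
  have h : (TrivSqZeroExt.fstHom R _ _).comp (cyclicDerivHom R M) = AlgHom.id R _ := by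
    ext v
    simp [cyclicDerivHom]
  exact AlgHom.congr_fun h a

theorem cyclicDeriv_ι (v : M) (x : TensorAlgebra R M) :
    cyclicDeriv R M (TensorAlgebra.ι R v) x = v ⊗ₜ x := by
  simp [cyclicDeriv, cyclicDerivHom]

theorem cyclicDeriv_mul (a b x : TensorAlgebra R M) :
    cyclicDeriv R M (a * b) x = cyclicDeriv R M a (b * x) + cyclicDeriv R M b (x * a) := by
  have leibniz : (cyclicDerivHom R M (a * b)).snd =
      a • (cyclicDerivHom R M b).snd + MulOpposite.op b • (cyclicDerivHom R M a).snd := by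
    rw [map_mul, TrivSqZeroExt.snd_mul, fst_cyclicDerivHom, fst_cyclicDerivHom]
  exact (LinearMap.congr_fun leibniz x).trans (add_comm _ _)

end CyclicDerivative

section OneForm

variable (R M : Type*) [CommRing R] [AddCommGroup M] [Module R M]

/-- Noncommutative one-forms on `T(M)`: `x ⊗ α` stands for `x · d(μ α)`, where
`μ : M ⊗ T(M) → T(M)` identifies `M ⊗ T(M)` with the augmentation ideal. -/
abbrev OneForm := TensorAlgebra R M ⊗[R] (M ⊗[R] TensorAlgebra R M)

namespace OneForm

/-- The multiplication map `μ : M ⊗ T(M) → T(M)`, which parametrises the augmentation ideal. -/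
def augMul : M ⊗[R] TensorAlgebra R M →ₗ[R] TensorAlgebra R M :=
  TensorProduct.lift (LinearMap.mul R (TensorAlgebra R M) ∘ₗ TensorAlgebra.ι R)

/-- The left action of `a ∈ T(M)` on one-forms. -/
def leftMul (a : TensorAlgebra R M) : OneForm R M →ₗ[R] OneForm R M :=
  TensorProduct.map (LinearMap.mulLeft R a) LinearMap.id

/-- The right action of `c + μ α ∈ T(M)` on one-forms, dictated by the Leibniz rule
`dy · a = d(y a) - y · da`. -/
def rightMul (c : R) (α : M ⊗[R] TensorAlgebra R M) : OneForm R M →ₗ[R] OneForm R M :=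
  c • LinearMap.id
  + TensorProduct.map LinearMap.id
      (TensorProduct.map LinearMap.id (LinearMap.mulRight R (augMul R M α)))
  - (TensorProduct.mk R (TensorAlgebra R M) (M ⊗[R] TensorAlgebra R M)).flip α ∘ₗ
      LinearMap.mul' R (TensorAlgebra R M) ∘ₗ TensorProduct.map LinearMap.id (augMul R M)

/-- The span of the commutators `a · ω - ω · a` of functions with one-forms. -/
def commutators : Submodule R (OneForm R M) :=
  Submodule.span R
    {u | ∃ (c : R) (α : M ⊗[R] TensorAlgebra R M) (ω : OneForm R M),
      u = leftMul R M (algebraMap R (TensorAlgebra R M) c + augMul R M α) ω - rightMul R M c α ω}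

/-- The map `M ⊗ T(M) → DR¹(M)`, `v ⊗ y ↦ dv · y`, written through the equal class of `y · dv`. -/
def theta : M ⊗[R] TensorAlgebra R M →ₗ[R] OneForm R M ⧸ commutators R M :=
  (commutators R M).mkQ ∘ₗ
    (TensorProduct.comm R (M ⊗[R] TensorAlgebra R M) (TensorAlgebra R M)).toLinearMap ∘ₗ
      TensorProduct.map ((TensorProduct.mk R M (TensorAlgebra R M)).flip 1) LinearMap.id

/-- The map `x · da ↦ D a x` from one-forms to `M ⊗ T(M)`, with `D` the cyclic derivative. It
descends to the inverse of `theta`. -/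
def contract : OneForm R M →ₗ[R] M ⊗[R] TensorAlgebra R M :=
  TensorProduct.lift (cyclicDeriv R M ∘ₗ augMul R M).flip

variable {R M}

theorem augMul_tmul (v : M) (w : TensorAlgebra R M) :
    augMul R M (v ⊗ₜ w) = TensorAlgebra.ι R v * w := rfl

theorem augMul_map_mulRight (β : M ⊗[R] TensorAlgebra R M) (a : TensorAlgebra R M) :
    augMul R M (TensorProduct.map LinearMap.id (LinearMap.mulRight R a) β) =
      augMul R M β * a := by
  induction β with
  | zero => simp
  | tmul v w => simp [augMul_tmul, mul_assoc]
  | add β γ hβ hγ => simp only [map_add, hβ, hγ, add_mul]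

theorem leftMul_tmul (a x : TensorAlgebra R M) (β : M ⊗[R] TensorAlgebra R M) :
    leftMul R M a (x ⊗ₜ β) = (a * x) ⊗ₜ β := rfl

theorem rightMul_tmul (c : R) (α β : M ⊗[R] TensorAlgebra R M) (x : TensorAlgebra R M) :
    rightMul R M c α (x ⊗ₜ β) = c • x ⊗ₜ β
      + x ⊗ₜ TensorProduct.map LinearMap.id (LinearMap.mulRight R (augMul R M α)) β
      - (x * augMul R M β) ⊗ₜ α := rfl

theorem theta_tmul (v : M) (y : TensorAlgebra R M) :
    theta R M (v ⊗ₜ y) = (commutators R M).mkQ (y ⊗ₜ (v ⊗ₜ 1)) := rfl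

theorem contract_tmul (x : TensorAlgebra R M) (β : M ⊗[R] TensorAlgebra R M) :
    contract R M (x ⊗ₜ β) = cyclicDeriv R M (augMul R M β) x := rfl

theorem contract_leftMul_eq_contract_rightMul (c : R) (α : M ⊗[R] TensorAlgebra R M)
    (ω : OneForm R M) :
    contract R M (leftMul R M (algebraMap R _ c + augMul R M α) ω) =
      contract R M (rightMul R M c α ω) := by
  induction ω using TensorProduct.induction_on with
  | zero => simp only [map_zero]
  | tmul x β =>
    simp only [leftMul_tmul, rightMul_tmul, map_add, map_sub, map_smul, contract_tmul,
      augMul_map_mulRight, cyclicDeriv_mul, add_mul, ← Algebra.smul_def]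
    abel
  | add ω η hω hη => rw [map_add, map_add, map_add, map_add, hω, hη]

theorem commutators_le_ker_contract : commutators R M ≤ LinearMap.ker (contract R M) := by
  refine Submodule.span_le.2 ?_
  rintro _ ⟨c, α, ω, rfl⟩
  rw [SetLike.mem_coe, LinearMap.mem_ker, map_sub, contract_leftMul_eq_contract_rightMul,
    sub_self]

theorem contract_theta (β : M ⊗[R] TensorAlgebra R M) :
    (commutators R M).liftQ (contract R M) commutators_le_ker_contract (theta R M β) = β := by
  induction β with
  | zero => simp only [map_zero]
  | tmul v y =>
    rw [theta_tmul, Submodule.mkQ_apply, Submodule.liftQ_apply, contract_tmul, augMul_tmul,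
      mul_one, cyclicDeriv_ι]
  | add β γ hβ hγ => rw [map_add, map_add, hβ, hγ]

theorem mkQ_tmul_mul_ι (x w : TensorAlgebra R M) (v u : M) :
    (commutators R M).mkQ (x ⊗ₜ (v ⊗ₜ (w * TensorAlgebra.ι R u))) =
      (commutators R M).mkQ ((TensorAlgebra.ι R u * x) ⊗ₜ (v ⊗ₜ w)) +
        theta R M (u ⊗ₜ (x * (TensorAlgebra.ι R v * w))) := by
  have h : leftMul R M (algebraMap R _ 0 + augMul R M (u ⊗ₜ 1)) (x ⊗ₜ (v ⊗ₜ w)) -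
      rightMul R M 0 (u ⊗ₜ 1) (x ⊗ₜ (v ⊗ₜ w)) ∈ commutators R M :=
    Submodule.subset_span ⟨0, u ⊗ₜ 1, x ⊗ₜ (v ⊗ₜ w), rfl⟩
  simp only [leftMul_tmul, rightMul_tmul, augMul_tmul, map_zero, zero_add, mul_one, zero_smul,
    TensorProduct.map_tmul, LinearMap.id_apply, LinearMap.mulRight_apply] at h
  rw [sub_sub_eq_add_sub] at h
  rw [theta_tmul, ← map_add]
  exact ((Submodule.Quotient.eq _).2 h).symm

theorem theta_contract_tmul (w x : TensorAlgebra R M) (v : M) :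
    theta R M (contract R M (x ⊗ₜ (v ⊗ₜ w))) = (commutators R M).mkQ (x ⊗ₜ (v ⊗ₜ w)) := by
  induction w using tensorAlgebra_right_induction generalizing x with
  | one => rw [contract_tmul, augMul_tmul, mul_one, cyclicDeriv_ι, theta_tmul]
  | smul r w hw => simp only [TensorProduct.tmul_smul, map_smul, hw]
  | add w w' hw hw' => simp only [TensorProduct.tmul_add, map_add, hw, hw']
  | mul_ι w u hw =>
    rw [mkQ_tmul_mul_ι, ← hw, ← map_add, contract_tmul, contract_tmul, augMul_tmul, augMul_tmul,
      ← mul_assoc, cyclicDeriv_mul, cyclicDeriv_ι]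

theorem theta_contract (ω : OneForm R M) :
    theta R M (contract R M ω) = (commutators R M).mkQ ω := by
  have h : theta R M ∘ₗ contract R M = (commutators R M).mkQ :=
    TensorProduct.ext <| LinearMap.ext fun x => TensorProduct.ext' fun v w =>
      theta_contract_tmul w x v
  exact LinearMap.congr_fun h ω

end OneForm

end OneForm

theorem statement_2_general (R M : Type*) [CommRing R] [AddCommGroup M] [Module R M] :
    Function.Bijective (OneForm.theta R M) := by
  refine ⟨Function.LeftInverse.injective OneForm.contract_theta, fun q => ?_⟩
  obtain ⟨ω, rfl⟩ := (OneForm.commutators R M).mkQ_surjective q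
  exact ⟨OneForm.contract R M ω, OneForm.theta_contract ω⟩

/-- Θ is an isomorphism of vector spaces (Lemma 2.9). -/
theorem statement_2 : Function.Bijective (Theta V) :=
  statement_2_general ℂ V

end
end

section
/- On the space h_{2n|m} := ⊕_{i≥0} (V^{⊗i})_{Z_i} of cyclic words in V := ℂ^{2n|m}, the bracket {a,b} := (−1)^{|a|} L_α(b) (where α is the symplectic vector field with i_α(ω) = −da for the standard even symplectic form ω) is super skew-symmetric: {a,b} = −(−1)^{|a||b|}{b,a}. -/
/- STATEMENT 5.  On the space h_{2n|m} = ⊕ᵢ (V^{⊗i})_{Zᵢ} of cyclic words in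
V = ℂ^{2n|m}, the bracket {a,b} (given, equivalently, by the explicit
contraction formula of Lemma 2.23) is super skew-symmetric:
{a,b} = −(−1)^{|a||b|} {b,a}.  Cyclic words are modelled as the quotient of the
free vector space on words in the standard homogeneous basis by the signed
cyclic-rotation relations; the claim is stated on word representatives, the
equality holding in the quotient. -/

noncomputable section

/-- The standard homogeneous basis of V = ℂ^{2n|m}: p₁,…,pₙ (= inl (inl i)),
q₁,…,qₙ (= inl (inr i)) even, and x₁,…,x_m (= inr j) odd. -/
abbrev BB (n m : ℕ) : Type := (Fin n ⊕ Fin n) ⊕ Fin m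

/-- Parity of a basis element. -/
def par {n m : ℕ} : BB n m → ℕ
  | .inl _ => 0
  | .inr _ => 1

/-- Parity of a word. -/
def pL {n m : ℕ} (ℓ : List (BB n m)) : ℕ := (ℓ.map par).sum

/-- The canonical even symplectic form ⟨−,−⟩ on ℂ^{2n|m}:
⟨pᵢ,qⱼ⟩ = δᵢⱼ = −⟨qⱼ,pᵢ⟩, ⟨xᵢ,xⱼ⟩ = δᵢⱼ, all other pairings zero. -/
def bform {n m : ℕ} : BB n m → BB n m → ℂ
  | .inl (.inl i), .inl (.inr j) => if i = j then 1 else 0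
  | .inl (.inr i), .inl (.inl j) => if i = j then -1 else 0
  | .inr i, .inr j => if i = j then 1 else 0
  | _, _ => 0

/-- The underlying vector space of the tensor algebra T(V):  the free vector
space on words in the basis. -/
abbrev FW (n m : ℕ) : Type := List (BB n m) →₀ ℂ

/-- The signed cyclic-rotation relations: the quotient FW/cycRel is the space
of cyclic words ⊕ᵢ (V^{⊗i})_{Zᵢ} (with Koszul signs). -/
def cycRel (n m : ℕ) : Submodule ℂ (FW n m) :=
  Submodule.span ℂ
    {u | ∃ (a : BB n m) (t : List (BB n m)),
      u = Finsupp.single (a :: t) (1 : ℂ)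
          - ((-1 : ℂ) ^ (par a * pL t)) • Finsupp.single (t ++ [a]) 1}

/-- The Koszul sign of the rotation z^{i}·(word with its i-th letter deleted). -/
def rdC {n m : ℕ} (ℓ : List (BB n m)) (i : ℕ) : ℂ :=
  (-1 : ℂ) ^ (pL (ℓ.take i) * pL (ℓ.drop (i + 1)))

/-- The word z^{i}·(ℓ with its i-th letter deleted). -/
def rdW {n m : ℕ} (ℓ : List (BB n m)) (i : ℕ) : List (BB n m) :=
  ℓ.drop (i + 1) ++ ℓ.take i

/-- The explicit bracket of Lemma 2.23 on cyclic words: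
{a₁⋯a_k, b₁⋯b_l} = Σᵢⱼ (−1)^p ⟨aᵢ,bⱼ⟩ (z^{i−1}·a₁⋯âᵢ⋯a_k)(z^{j−1}·b₁⋯b̂ⱼ⋯b_l),
p = |aᵢ|(|a_{i+1}|+⋯+|a_k|+|b₁|+⋯+|b_{j−1}|). -/
def bracketWord {n m : ℕ} (a b : List (BB n m)) : FW n m :=
  ∑ i : Fin a.length, ∑ j : Fin b.length,
    (((-1 : ℂ) ^ (par (a.get i) * (pL (a.drop (i.val + 1)) + pL (b.take j.val))))
        * bform (a.get i) (b.get j) * rdC a i.val * rdC b j.val)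
      • Finsupp.single (rdW a i.val ++ rdW b j.val) (1 : ℂ)

/- The `(i, j)` term of `{a, b}` is compared with the `(j, i)` term of `{b, a}`. Their cyclic words
differ by a rotation, at the cost of a Koszul sign; the signs of the two partial rotations agree on
both sides; and the form contributes `⟨x, y⟩ = -(-1)^(|x||y|) ⟨y, x⟩`. Since the form is even, a
nonzero contraction has `|x| = |y| = p`, so that `|a| = p + |â|` and `|b| = p + |b̂|`, where the
hats denote the words with `x` and `y` deleted, and the signs combine to `-(-1)^(|a||b|)`. -/

section

variable {n m : ℕ}

theorem pL_cons (x : BB n m) (w : List (BB n m)) : pL (x :: w) = par x + pL w := by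
  simp [pL]

theorem pL_singleton (x : BB n m) : pL [x] = par x := by
  simp [pL]

theorem pL_append (u v : List (BB n m)) : pL (u ++ v) = pL u + pL v := by
  simp [pL]

theorem pL_eq_take_add_get_add_drop (w : List (BB n m)) (i : Fin w.length) :
    pL w = pL (w.take i) + par (w.get i) + pL (w.drop (i + 1)) := by
  conv_lhs => rw [← List.take_append_drop i w, List.drop_eq_getElem_cons i.isLt]
  rw [pL_append, pL_cons, List.get_eq_getElem, add_assoc]

theorem pL_rdW (w : List (BB n m)) (i : ℕ) :
    pL (rdW w i) = pL (w.drop (i + 1)) + pL (w.take i) :=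
  pL_append _ _

theorem bform_swap (x y : BB n m) :
    bform x y = -((-1 : ℂ) ^ (par x * par y) * bform y x) := by
  rcases x with (i | i) | i <;> rcases y with (j | j) | j <;>
    simp [bform, par, eq_comm, apply_ite]

theorem par_eq_of_bform_ne_zero {x y : BB n m} (h : bform x y ≠ 0) : par x = par y := by
  rcases x with (i | i) | i <;> rcases y with (j | j) | j <;> simp_all [bform, par]

/-- The class in `⨁ᵢ (V^{⊗i})_{Zᵢ}` of a word in the homogeneous basis. -/
def cyclicWord (w : List (BB n m)) : FW n m ⧸ cycRel n m :=
  (cycRel n m).mkQ (Finsupp.single w 1)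

theorem cyclicWord_cons (x : BB n m) (w : List (BB n m)) :
    cyclicWord (x :: w) = (-1 : ℂ) ^ (par x * pL w) • cyclicWord (w ++ [x]) := by
  rw [cyclicWord, cyclicWord, ← map_smul, ← sub_eq_zero, ← map_sub, Submodule.mkQ_apply,
    Submodule.Quotient.mk_eq_zero]
  exact Submodule.subset_span ⟨x, w, rfl⟩

theorem cyclicWord_append_comm (u v : List (BB n m)) :
    cyclicWord (u ++ v) = (-1 : ℂ) ^ (pL u * pL v) • cyclicWord (v ++ u) := by
  induction u generalizing v with
  | nil => simp [pL]
  | cons x u ih =>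
    have sign : (-1 : ℂ) ^ (par x * pL (u ++ v)) * (-1) ^ (pL u * pL (v ++ [x]))
        = (-1) ^ (pL (x :: u) * pL v) := by
      have exponent : par x * pL (u ++ v) + pL u * pL (v ++ [x])
          = pL (x :: u) * pL v + 2 * (par x * pL u) := by
        rw [pL_append, pL_append, pL_cons x u, pL_singleton]
        ring
      rw [← pow_add, exponent, pow_add, (even_two_mul _).neg_one_pow, mul_one]
    calc cyclicWord (x :: (u ++ v))
        = (-1 : ℂ) ^ (par x * pL (u ++ v)) • cyclicWord (u ++ (v ++ [x])) := by
          rw [cyclicWord_cons, List.append_assoc]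
      _ = (-1 : ℂ) ^ (pL (x :: u) * pL v) • cyclicWord (v ++ [x] ++ u) := by
          rw [ih, smul_smul, sign]
      _ = (-1 : ℂ) ^ (pL (x :: u) * pL v) • cyclicWord (v ++ x :: u) := by
          rw [List.append_assoc, List.singleton_append]

/-- The coefficient with which the contraction of the `i`-th letter of `a` against the `j`-th letter
of `b` enters the bracket `{a, b}`. -/
def bracketCoeff (a b : List (BB n m)) (i : Fin a.length) (j : Fin b.length) : ℂ :=
  (-1) ^ (par (a.get i) * (pL (a.drop (i + 1)) + pL (b.take j)))
    * bform (a.get i) (b.get j) * rdC a i * rdC b j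

theorem mkQ_bracketWord (a b : List (BB n m)) :
    (cycRel n m).mkQ (bracketWord a b)
      = ∑ i, ∑ j, bracketCoeff a b i j • cyclicWord (rdW a i ++ rdW b j) := by
  simp only [bracketWord, map_sum, map_smul, bracketCoeff, cyclicWord]

/- Here `p` is the common parity of the two contracted letters, and `a₁`, `a₂` (resp. `b₁`, `b₂`)
are the parities of the subwords before and after them. -/
theorem neg_one_pow_contraction_swap {R : Type*} [Monoid R] [HasDistribNeg R]
    (p a₁ a₂ b₁ b₂ : ℕ) :
    (-1 : R) ^ (p * p) * (-1) ^ (p * (a₂ + b₁)) * (-1) ^ ((a₂ + a₁) * (b₂ + b₁))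
      = (-1) ^ ((a₁ + p + a₂) * (b₁ + p + b₂)) * (-1) ^ (p * (b₂ + a₁)) := by
  have exponent : (a₁ + p + a₂) * (b₁ + p + b₂) + p * (b₂ + a₁)
      = p * p + p * (a₂ + b₁) + (a₂ + a₁) * (b₂ + b₁) + 2 * (p * (a₁ + b₂)) := by
    ring
  rw [← pow_add, ← pow_add, ← pow_add, exponent, pow_add _ _ (2 * _),
    (even_two_mul _).neg_one_pow, mul_one]

theorem bracketCoeff_swap (a b : List (BB n m)) (i : Fin a.length) (j : Fin b.length) :
    bracketCoeff a b i j * (-1) ^ (pL (rdW a i) * pL (rdW b j))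
      = -(-1) ^ (pL a * pL b) * bracketCoeff b a j i := by
  by_cases h : bform (b.get j) (a.get i) = 0
  · have h' : bform (a.get i) (b.get j) = 0 := by rw [bform_swap, h, mul_zero, neg_zero]
    simp only [bracketCoeff, h, h', mul_zero, zero_mul]
  · have par_eq : par (b.get j) = par (a.get i) := par_eq_of_bform_ne_zero h
    have sign := neg_one_pow_contraction_swap (R := ℂ) (par (a.get i))
      (pL (a.take i)) (pL (a.drop (i + 1))) (pL (b.take j)) (pL (b.drop (j + 1)))
    rw [bracketCoeff, bracketCoeff, pL_rdW, pL_rdW, pL_eq_take_add_get_add_drop a i,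
      pL_eq_take_add_get_add_drop b j, bform_swap (a.get i), par_eq]
    linear_combination -(bform (b.get j) (a.get i) * rdC a i * rdC b j) * sign

theorem bracketCoeff_smul_cyclicWord_swap (a b : List (BB n m))
    (i : Fin a.length) (j : Fin b.length) :
    bracketCoeff a b i j • cyclicWord (rdW a i ++ rdW b j)
      = (-(-1 : ℂ) ^ (pL a * pL b)) • bracketCoeff b a j i • cyclicWord (rdW b j ++ rdW a i) := by
  rw [cyclicWord_append_comm, smul_smul, smul_smul, bracketCoeff_swap]

end

/-- Super skew-symmetry of the bracket on cyclic words. -/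
theorem statement_5 (n m : ℕ) (a b : List (BB n m)) :
    (cycRel n m).mkQ (bracketWord a b)
      = (-((-1 : ℂ) ^ (pL a * pL b))) • (cycRel n m).mkQ (bracketWord b a) := by
  calc (cycRel n m).mkQ (bracketWord a b)
      = ∑ i, ∑ j, bracketCoeff a b i j • cyclicWord (rdW a i ++ rdW b j) :=
        mkQ_bracketWord a b
    _ = ∑ i, ∑ j, (-(-1 : ℂ) ^ (pL a * pL b)) •
          bracketCoeff b a j i • cyclicWord (rdW b j ++ rdW a i) := by
        simp only [bracketCoeff_smul_cyclicWord_swap a b]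
    _ = (-(-1 : ℂ) ^ (pL a * pL b)) •
          ∑ j, ∑ i, bracketCoeff b a j i • cyclicWord (rdW b j ++ rdW a i) := by
        rw [Finset.sum_comm]
        simp only [Finset.smul_sum]
    _ = (-(-1 : ℂ) ^ (pL a * pL b)) • (cycRel n m).mkQ (bracketWord b a) := by
        rw [mkQ_bracketWord b a]

end
end
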